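/- For k = 0,1, let μ̂ₙᵏ ∈ ℝ^p and symmetric positive definite p×p matrices Σ̂ₙᵏ satisfy μ̂ₙᵏ → μ_k in ℝ^p and Σ̂ₙᵏ → Σ_k (in Frobenius norm) as n → ∞, and let Êₙ be the classification error function defined from (μ̂ₙ⁰, μ̂ₙ¹, Σ̂ₙ⁰, Σ̂ₙ¹) by the same formula as E. Then Êₙ converges to E uniformly on the unit sphere S^{p−1} = {α ∈ ℝ^p : ‖α‖ = 1}, i.e. sup_{‖α‖=1} |Êₙ(α) − E(α)| → 0. -/

import Mathlib

open MeasureTheory ProbabilityTheory Matrix Filter Set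

noncomputable def Phi (t : ℝ) : ℝ := ((gaussianReal 0 1) (Set.Iic t)).toReal
noncomputable def calE (r g : ℝ) : ℝ :=
  if g = 1 then Phi (-(|r| / 2))
  else
    1/2
      + (1/2) * Phi ((r - g * Real.sqrt (r^2 + (g^2 - 1) * Real.log (g^2))) / (g^2 - 1))
      - (1/2) * Phi ((r + g * Real.sqrt (r^2 + (g^2 - 1) * Real.log (g^2))) / (g^2 - 1))
      + (1/2) * Phi ((r * g + Real.sqrt (r^2 + (g^2 - 1) * Real.log (g^2))) / (g^2 - 1))
      - (1/2) * Phi ((r * g - Real.sqrt (r^2 + (g^2 - 1) * Real.log (g^2))) / (g^2 - 1))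
noncomputable def Evec {p : ℕ} (μ0 μ1 : Fin p → ℝ) (S0 S1 : Matrix (Fin p) (Fin p) ℝ)
    (α : Fin p → ℝ) : ℝ :=
  calE ((dotProduct α μ0 - dotProduct α μ1) / Real.sqrt (dotProduct α (S1.mulVec α)))
    (Real.sqrt (dotProduct α (S0.mulVec α)) / Real.sqrt (dotProduct α (S1.mulVec α)))
noncomputable def frobNorm {p : ℕ} (M : Matrix (Fin p) (Fin p) ℝ) : ℝ :=
  Real.sqrt (∑ i, ∑ j, (M i j)^2)

lemma Phi_sub_le {a b : ℝ} (h : a ≤ b) : Phi b - Phi a ≤ b - a ∧ 0 ≤ Phi b - Phi a := by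
  have hu : Iic b = Iic a ∪ Ioc a b := (Iic_union_Ioc_eq_Iic h).symm
  have hd : Disjoint (Iic a) (Ioc a b) := by
    rw [Set.disjoint_left]
    intro x hx hx'
    exact absurd hx'.1 (not_lt.2 hx)
  have e : Phi b = Phi a + ((gaussianReal 0 1) (Ioc a b)).toReal := by
    unfold Phi
    rw [hu, measure_union hd measurableSet_Ioc,
      ENNReal.toReal_add (measure_ne_top _ _) (measure_ne_top _ _)]
  have hle : (gaussianReal 0 1) (Ioc a b) ≤ ENNReal.ofReal (b - a) := by
    rw [gaussianReal_apply 0 one_ne_zero]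
    calc ∫⁻ x in Ioc a b, gaussianPDF 0 1 x ≤ ∫⁻ x in Ioc a b, 1 := by
          apply lintegral_mono
          intro x
          unfold gaussianPDF
          rw [← ENNReal.ofReal_one]
          apply ENNReal.ofReal_le_ofReal
          unfold gaussianPDFReal
          have h1 : (√(2 * Real.pi * ((1 : NNReal) : ℝ)))⁻¹ ≤ 1 := by
            apply inv_le_one_of_one_le₀
            rw [Real.one_le_sqrt]
            have := Real.pi_gt_three
            push_cast
            linarith
          have h2 : Real.exp (-(x - 0) ^ 2 / (2 * ((1 : NNReal) : ℝ))) ≤ 1 := by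
            rw [Real.exp_le_one_iff]
            push_cast
            nlinarith [sq_nonneg x]
          exact mul_le_one₀ h1 (Real.exp_pos _).le h2
      _ = ENNReal.ofReal (b - a) := by simp
  constructor
  · have := ENNReal.toReal_mono ENNReal.ofReal_ne_top hle
    rw [ENNReal.toReal_ofReal (by linarith)] at this
    linarith
  · have : 0 ≤ ((gaussianReal 0 1) (Ioc a b)).toReal := ENNReal.toReal_nonneg
    linarith

lemma Phi_lip (a b : ℝ) : |Phi a - Phi b| ≤ |a - b| := by
  rcases le_total a b with h | h
  · have := Phi_sub_le h
    rw [abs_sub_comm, abs_sub_comm a, abs_of_nonneg this.2, abs_of_nonneg (by linarith)]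
    exact this.1
  · have := Phi_sub_le h
    rw [abs_of_nonneg this.2, abs_of_nonneg (by linarith)]
    exact this.1

lemma Phi_cont : Continuous Phi := by
  have : LipschitzWith 1 Phi := LipschitzWith.of_dist_le_mul (fun a b => by
    simpa [Real.dist_eq] using Phi_lip a b)
  exact this.continuous

lemma Phi_neg (t : ℝ) : Phi (-t) = 1 - Phi t := by
  have hm : (gaussianReal 0 1).map (fun x => -x) = gaussianReal 0 1 := by
    rw [gaussianReal_map_neg]; simp
  have h1 : (gaussianReal 0 1) (Iic (-t)) = (gaussianReal 0 1) (Ici t) := by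
    conv_lhs => rw [← hm]
    rw [Measure.map_apply measurable_neg measurableSet_Iic]
    congr 1
    ext x
    simp
  have : NullSingletonClass (gaussianReal 0 1) := nullSingletonClass_gaussianReal one_ne_zero
  have h2 : (gaussianReal 0 1) (Ici t) = (gaussianReal 0 1) (Iic t)ᶜ := by
    rw [compl_Iic]; exact Ioi_ae_eq_Ici.symm.measure_eq
  unfold Phi
  rw [h1, h2]
  exact probReal_compl_eq_one_sub measurableSet_Iic

lemma Phi_diff_tendsto {ι : Type*} {l : Filter ι} {f g : ι → ℝ}
    (h : Tendsto (fun x => f x - g x) l (nhds 0)) :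
    Tendsto (fun x => Phi (f x) - Phi (g x)) l (nhds 0) := by
  rw [tendsto_zero_iff_abs_tendsto_zero] at h ⊢
  exact squeeze_zero (fun _ => abs_nonneg _) (fun x => Phi_lip _ _) h

lemma tendsto_div_of {ι : Type*} {l : Filter ι} {f g : ι → ℝ} {a b c : ℝ}
    (hf : Tendsto f l (nhds a)) (hg : Tendsto g l (nhds b)) (hb : b ≠ 0) (hc : a / b = c) :
    Tendsto (fun x => f x / g x) l (nhds c) := hc ▸ hf.div hg hb

lemma disc_nonneg (r g : ℝ) : 0 ≤ r^2 + (g^2 - 1) * Real.log (g^2) := by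
  have : 0 ≤ (g^2 - 1) * Real.log (g^2) := by
    rcases eq_or_ne g 0 with h0 | h0
    · simp [h0]
    have hp : 0 < g^2 := by positivity
    rcases le_total (g^2) 1 with h | h
    · exact mul_nonneg_of_nonpos_of_nonpos (by linarith) (Real.log_nonpos hp.le h)
    · exact mul_nonneg (by linarith) (Real.log_nonneg h)
  positivity

/-- The rewritten form of the generic branch. -/
lemma calE_alt {r g : ℝ} (hg : g ≠ 1) : calE r g = 1/2
    + (1/2) * (Phi ((r - g * Real.sqrt (r^2 + (g^2 - 1) * Real.log (g^2))) / (g^2 - 1))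
      - Phi ((r * g - Real.sqrt (r^2 + (g^2 - 1) * Real.log (g^2))) / (g^2 - 1)))
    - (1/2) * (Phi ((r + g * Real.sqrt (r^2 + (g^2 - 1) * Real.log (g^2))) / (g^2 - 1))
      - Phi ((r * g + Real.sqrt (r^2 + (g^2 - 1) * Real.log (g^2))) / (g^2 - 1))) := by
  unfold calE
  rw [if_neg hg]
  ring

lemma calE_neg (r g : ℝ) : calE (-r) g = calE r g := by
  by_cases hg : g = 1
  · simp [calE, hg]
  rw [calE_alt hg, calE_alt hg, neg_sq]
  set s := Real.sqrt (r^2 + (g^2 - 1) * Real.log (g^2))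
  have e1 : (-r - g * s) / (g^2 - 1) = -((r + g * s) / (g^2 - 1)) := by ring
  have e2 : (-r + g * s) / (g^2 - 1) = -((r - g * s) / (g^2 - 1)) := by ring
  have e3 : (-r * g - s) / (g^2 - 1) = -((r * g + s) / (g^2 - 1)) := by ring
  have e4 : (-r * g + s) / (g^2 - 1) = -((r * g - s) / (g^2 - 1)) := by ring
  rw [e1, e2, e3, e4, Phi_neg, Phi_neg, Phi_neg, Phi_neg]
  ring

lemma sqrt_tendsto (r₀ : ℝ) : Tendsto
    (fun x : ℝ × ℝ => Real.sqrt (x.1^2 + (x.2^2 - 1) * Real.log (x.2^2)))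
    (nhds (r₀, 1)) (nhds |r₀|) := by
  have : ContinuousAt
    (fun x : ℝ × ℝ => Real.sqrt (x.1^2 + (x.2^2 - 1) * Real.log (x.2^2))) (r₀, 1) := by
    have : ((r₀, (1:ℝ)).2)^2 ≠ 0 := by simp
    fun_prop (disch := assumption)
  have h := this.tendsto
  simpa [Real.sqrt_sq_eq_abs] using h

/-- Continuity at `g = 1`, generic branch, `0 ≤ r₀`. -/
lemma calE_tendsto_one (r₀ : ℝ) (hr : 0 ≤ r₀) :
    Tendsto (fun x : ℝ × ℝ => calE x.1 x.2) (nhdsWithin (r₀, 1) {x | x.2 ≠ 1})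
      (nhds (Phi (-(|r₀| / 2)))) := by
  set l := nhdsWithin (r₀, (1:ℝ)) {x | x.2 ≠ 1} with hl
  have hs := (sqrt_tendsto r₀).mono_left (nhdsWithin_le_nhds (s := {x : ℝ × ℝ | x.2 ≠ 1}))
  rw [abs_of_nonneg hr] at hs ⊢
  rw [← hl] at hs
  have t1 : Tendsto (fun x : ℝ × ℝ => x.1) l (nhds r₀) :=
    (continuous_fst.tendsto (r₀, (1:ℝ))).mono_left nhdsWithin_le_nhds
  have t2 : Tendsto (fun x : ℝ × ℝ => x.2) l (nhds 1) :=
    (continuous_snd.tendsto (r₀, (1:ℝ))).mono_left nhdsWithin_le_nhds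
  have hne : ∀ᶠ x in l, x.2 ≠ 1 := eventually_mem_nhdsWithin
  have hpos : ∀ᶠ x in l, 0 < x.2 := t2.eventually_const_lt one_pos
  have hBC : Tendsto (fun x : ℝ × ℝ =>
      Phi ((x.1 + x.2 * Real.sqrt (x.1^2 + (x.2^2 - 1) * Real.log (x.2^2))) / (x.2^2 - 1))
      - Phi ((x.1 * x.2 + Real.sqrt (x.1^2 + (x.2^2 - 1) * Real.log (x.2^2))) / (x.2^2 - 1)))
      l (nhds 0) := by
    apply Phi_diff_tendsto
    have h : Tendsto (fun x : ℝ × ℝ =>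
        (Real.sqrt (x.1^2 + (x.2^2 - 1) * Real.log (x.2^2)) - x.1) / (x.2 + 1)) l (nhds 0) := by
      exact tendsto_div_of (hs.sub t1) (t2.add_const 1) (by norm_num) (by simp)
    refine h.congr' ?_
    filter_upwards [hne, hpos] with x hx hx'
    have a1 : x.2 - 1 ≠ 0 := sub_ne_zero.2 hx
    have a2 : x.2 + 1 ≠ 0 := by positivity
    have a3 : x.2^2 - 1 = (x.2 - 1) * (x.2 + 1) := by ring
    generalize Real.sqrt (x.1^2 + (x.2^2 - 1) * Real.log (x.2^2)) = s
    rw [a3]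
    field_simp
    ring
  have hAD : Tendsto (fun x : ℝ × ℝ =>
      Phi ((x.1 - x.2 * Real.sqrt (x.1^2 + (x.2^2 - 1) * Real.log (x.2^2))) / (x.2^2 - 1))
      - Phi ((x.1 * x.2 - Real.sqrt (x.1^2 + (x.2^2 - 1) * Real.log (x.2^2))) / (x.2^2 - 1)))
      l (nhds (Phi (-(r₀ / 2)) - Phi (r₀ / 2))) := by
    rcases hr.eq_or_lt with h0 | h0
    · subst h0
      simp only [zero_div, neg_zero, sub_self]
      apply Phi_diff_tendsto
      have h : Tendsto (fun x : ℝ × ℝ =>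
          -(Real.sqrt (x.1^2 + (x.2^2 - 1) * Real.log (x.2^2)) + x.1) / (x.2 + 1))
          l (nhds 0) := by
        exact tendsto_div_of (hs.add t1).neg (t2.add_const 1) (by norm_num) (by simp)
      refine h.congr' ?_
      filter_upwards [hne, hpos] with x hx hx'
      have a1 : x.2 - 1 ≠ 0 := sub_ne_zero.2 hx
      have a2 : x.2 + 1 ≠ 0 := by positivity
      have a3 : x.2^2 - 1 = (x.2 - 1) * (x.2 + 1) := by ring
      generalize Real.sqrt (x.1^2 + (x.2^2 - 1) * Real.log (x.2^2)) = s
      rw [a3]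
      field_simp
      ring
    · have hrp : ∀ᶠ x in l, 0 < x.1 := t1.eventually_const_lt h0
      have t3 : Tendsto (fun x : ℝ × ℝ => Real.log (x.2^2)) l (nhds 0) := by
        have := (t2.pow 2).log (by norm_num)
        simpa using this
      have hA : Tendsto (fun x : ℝ × ℝ =>
          (x.1 - x.2 * Real.sqrt (x.1^2 + (x.2^2 - 1) * Real.log (x.2^2))) / (x.2^2 - 1))
          l (nhds (-(r₀ / 2))) := by
        have h : Tendsto (fun x : ℝ × ℝ => (-x.1^2 - x.2^2 * Real.log (x.2^2)) /
            (x.1 + x.2 * Real.sqrt (x.1^2 + (x.2^2 - 1) * Real.log (x.2^2))))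
            l (nhds (-(r₀ / 2))) := by
          exact tendsto_div_of ((t1.pow 2).neg.sub ((t2.pow 2).mul t3)) (t1.add (t2.mul hs))
            (by rw [one_mul]; positivity) (by
              rw [one_mul, mul_zero, sub_zero, ← two_mul]; field_simp)
        refine h.congr' ?_
        filter_upwards [hne, hpos, hrp] with x hx hx' hx1
        have a1 : x.2^2 - 1 ≠ 0 := by
          have : x.2^2 - 1 = (x.2 - 1) * (x.2 + 1) := by ring
          rw [this]
          exact mul_ne_zero (sub_ne_zero.2 hx) (by positivity)
        have a4 := Real.sq_sqrt (disc_nonneg x.1 x.2)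
        have a5 := Real.sqrt_nonneg (x.1^2 + (x.2^2 - 1) * Real.log (x.2^2))
        set s := Real.sqrt (x.1^2 + (x.2^2 - 1) * Real.log (x.2^2))
        rw [div_eq_div_iff (by positivity) a1]
        linear_combination x.2^2 * a4
      have hD : Tendsto (fun x : ℝ × ℝ =>
          (x.1 * x.2 - Real.sqrt (x.1^2 + (x.2^2 - 1) * Real.log (x.2^2))) / (x.2^2 - 1))
          l (nhds (r₀ / 2)) := by
        have h : Tendsto (fun x : ℝ × ℝ => (x.1^2 - Real.log (x.2^2)) /
            (x.1 * x.2 + Real.sqrt (x.1^2 + (x.2^2 - 1) * Real.log (x.2^2))))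
            l (nhds (r₀ / 2)) := by
          exact tendsto_div_of ((t1.pow 2).sub t3) ((t1.mul t2).add hs)
            (by rw [mul_one]; positivity) (by
              rw [mul_one, sub_zero, ← two_mul]; field_simp)
        refine h.congr' ?_
        filter_upwards [hne, hpos, hrp] with x hx hx' hx1
        have a1 : x.2^2 - 1 ≠ 0 := by
          have : x.2^2 - 1 = (x.2 - 1) * (x.2 + 1) := by ring
          rw [this]
          exact mul_ne_zero (sub_ne_zero.2 hx) (by positivity)
        have a4 := Real.sq_sqrt (disc_nonneg x.1 x.2)
        have a5 := Real.sqrt_nonneg (x.1^2 + (x.2^2 - 1) * Real.log (x.2^2))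
        set s := Real.sqrt (x.1^2 + (x.2^2 - 1) * Real.log (x.2^2))
        rw [div_eq_div_iff (by positivity) a1]
        linear_combination a4
      exact ((Phi_cont.tendsto _).comp hA).sub ((Phi_cont.tendsto _).comp hD)
  have hfin := ((hAD.const_mul (1/2)).const_add (1/2)).sub (hBC.const_mul (1/2))
  have hval : (1/2 + 1/2 * (Phi (-(r₀ / 2)) - Phi (r₀ / 2)) - 1/2 * 0 : ℝ)
      = Phi (-(r₀ / 2)) := by
    rw [Phi_neg]; ring
  rw [hval] at hfin
  refine hfin.congr' ?_
  filter_upwards [hne] with x hx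
  exact (calE_alt hx).symm

lemma calE_tendsto_one' (r₀ : ℝ) :
    Tendsto (fun x : ℝ × ℝ => calE x.1 x.2) (nhdsWithin (r₀, 1) {x | x.2 ≠ 1})
      (nhds (Phi (-(|r₀| / 2)))) := by
  rcases le_total 0 r₀ with h | h
  · exact calE_tendsto_one r₀ h
  · have h1 := calE_tendsto_one (-r₀) (by linarith)
    rw [abs_neg] at h1
    have h2 : Tendsto (fun x : ℝ × ℝ => (-x.1, x.2)) (nhdsWithin (r₀, 1) {x | x.2 ≠ 1})
        (nhdsWithin (-r₀, 1) {x | x.2 ≠ 1}) := by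
      apply tendsto_nhdsWithin_of_tendsto_nhds_of_eventually_within
      · have c : Continuous (fun x : ℝ × ℝ => (-x.1, x.2)) := by fun_prop
        exact (c.tendsto (r₀, (1:ℝ))).mono_left nhdsWithin_le_nhds
      · exact eventually_mem_nhdsWithin
    refine (h1.comp h2).congr ?_
    intro x
    exact calE_neg _ _

lemma calE_continuousAt (r g : ℝ) (hg : 0 < g) :
    ContinuousAt (fun x : ℝ × ℝ => calE x.1 x.2) (r, g) := by
  by_cases h : g = 1
  · subst h
    have hv : calE r 1 = Phi (-(|r| / 2)) := by simp [calE]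
    unfold ContinuousAt
    simp only [hv]
    rw [← nhdsWithin_univ, ← Set.union_compl_self {x : ℝ × ℝ | x.2 ≠ 1}, nhdsWithin_union]
    refine (calE_tendsto_one' r).sup ?_
    have c : Continuous (fun x : ℝ × ℝ => Phi (-(|x.1| / 2))) :=
      Phi_cont.comp (by fun_prop)
    refine ((c.tendsto (r, (1:ℝ))).mono_left nhdsWithin_le_nhds).congr' ?_
    filter_upwards [self_mem_nhdsWithin] with x hx
    have : x.2 = 1 := by simpa using hx
    simp [calE, this]
  · have hu : ((r, g).2)^2 - 1 ≠ 0 := by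
      have : g^2 - 1 = (g - 1) * (g + 1) := by ring
      simp only [this]
      exact mul_ne_zero (sub_ne_zero.2 h) (by positivity)
    have hn : ((r, g).2)^2 ≠ 0 := by simp only []; positivity
    have hne : ∀ᶠ x : ℝ × ℝ in nhds (r, g), x.2 ≠ 1 :=
      (continuous_snd.tendsto (r, g)).eventually_ne h
    have P : ∀ f : ℝ × ℝ → ℝ, ContinuousAt f (r, g) →
        ContinuousAt (fun x => Phi (f x)) (r, g) :=
      fun f hf => Phi_cont.continuousAt.comp hf
    refine ContinuousAt.congr ?_ (hne.mono fun x hx => (calE_alt hx).symm)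
    refine ContinuousAt.sub (ContinuousAt.add continuousAt_const
      (ContinuousAt.mul continuousAt_const (ContinuousAt.sub (P _ ?_) (P _ ?_))))
      (ContinuousAt.mul continuousAt_const (ContinuousAt.sub (P _ ?_) (P _ ?_))) <;>
    fun_prop (disch := assumption)

/-- If the estimated means and covariances converge (covariances in Frobenius norm),
then the empirical classification error functions Êₙ converge uniformly to E on the
unit sphere. -/
theorem Evec_uniform_convergence {p : ℕ} (hp : 1 ≤ p)
    (μ0 μ1 : EuclideanSpace ℝ (Fin p)) (S0 S1 : Matrix (Fin p) (Fin p) ℝ)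
    (h0 : S0.PosDef) (h1 : S1.PosDef)
    (μh0 μh1 : ℕ → EuclideanSpace ℝ (Fin p)) (Sh0 Sh1 : ℕ → Matrix (Fin p) (Fin p) ℝ)
    (hpd0 : ∀ n, (Sh0 n).PosDef) (hpd1 : ∀ n, (Sh1 n).PosDef)
    (hμ0 : Tendsto μh0 atTop (nhds μ0)) (hμ1 : Tendsto μh1 atTop (nhds μ1))
    (hS0 : Tendsto (fun n => frobNorm (Sh0 n - S0)) atTop (nhds 0))
    (hS1 : Tendsto (fun n => frobNorm (Sh1 n - S1)) atTop (nhds 0)) :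
    TendstoUniformlyOn (fun n (α : EuclideanSpace ℝ (Fin p)) =>
        Evec (μh0 n) (μh1 n) (Sh0 n) (Sh1 n) α)
      (fun α : EuclideanSpace ℝ (Fin p) => Evec μ0 μ1 S0 S1 α) atTop
      (Metric.sphere (0 : EuclideanSpace ℝ (Fin p)) 1) := by
  have entry : ∀ (S : Matrix (Fin p) (Fin p) ℝ) (Sh : ℕ → Matrix (Fin p) (Fin p) ℝ),
      Tendsto (fun n => frobNorm (Sh n - S)) atTop (nhds 0) →
      Tendsto Sh atTop (nhds S) := by
    intro S Sh h
    refine tendsto_pi_nhds.2 fun i => tendsto_pi_nhds.2 fun j => ?_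
    rw [tendsto_iff_norm_sub_tendsto_zero]
    refine squeeze_zero (fun _ => norm_nonneg _) (fun n => ?_) h
    unfold frobNorm
    rw [Real.norm_eq_abs]
    apply Real.abs_le_sqrt
    calc (Sh n i j - S i j) ^ 2 = ((Sh n - S) i j) ^ 2 := by simp
      _ ≤ ∑ j, ((Sh n - S) i j) ^ 2 :=
        Finset.single_le_sum (f := fun j => ((Sh n - S) i j) ^ 2)
          (fun _ _ => sq_nonneg _) (Finset.mem_univ j)
      _ ≤ ∑ i, ∑ j, ((Sh n - S) i j) ^ 2 :=
        Finset.single_le_sum (f := fun i => ∑ j, ((Sh n - S) i j) ^ 2)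
          (fun _ _ => Finset.sum_nonneg fun _ _ => sq_nonneg _) (Finset.mem_univ i)
  have hT0 := entry S0 Sh0 hS0
  have hT1 := entry S1 Sh1 hS1
  rw [← tendstoLocallyUniformlyOn_iff_tendstoUniformlyOn_of_compact (isCompact_sphere _ _),
    tendstoLocallyUniformlyOn_iff_forall_tendsto]
  intro a ha
  have ha0 : a.ofLp ≠ 0 := by
    intro h
    have : a = 0 := by ext i; simp [h]
    simp [this] at ha
  have hq : ∀ S : Matrix (Fin p) (Fin p) ℝ, S.PosDef → 0 < dotProduct a.ofLp (S.mulVec a.ofLp) := by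
    intro S hS
    simpa using hS.dotProduct_mulVec_pos ha0
  have key : ∀ (l : Filter (ℕ × EuclideanSpace ℝ (Fin p)))
      (m0 m1 : ℕ × EuclideanSpace ℝ (Fin p) → EuclideanSpace ℝ (Fin p))
      (T0 T1 : ℕ × EuclideanSpace ℝ (Fin p) → Matrix (Fin p) (Fin p) ℝ)
      (b : ℕ × EuclideanSpace ℝ (Fin p) → EuclideanSpace ℝ (Fin p)),
      Tendsto m0 l (nhds μ0) → Tendsto m1 l (nhds μ1) → Tendsto T0 l (nhds S0) →
      Tendsto T1 l (nhds S1) → Tendsto b l (nhds a) →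
      Tendsto (fun y => Evec (m0 y) (m1 y) (T0 y) (T1 y) (b y)) l
        (nhds (Evec μ0 μ1 S0 S1 a)) := by
    intro l m0 m1 T0 T1 b hm0 hm1 h0' h1' hb
    have c : Continuous (fun v : EuclideanSpace ℝ (Fin p) => v.ofLp) := by fun_prop
    have hb' := (c.tendsto a).comp hb
    have hm0' := (c.tendsto μ0).comp hm0
    have hm1' := (c.tendsto μ1).comp hm1
    have dot : Continuous (fun v : (Fin p → ℝ) × (Fin p → ℝ) => dotProduct v.1 v.2) := by
      fun_prop
    have quad : Continuous (fun v : (Fin p → ℝ) × Matrix (Fin p) (Fin p) ℝ =>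
        dotProduct v.1 (v.2.mulVec v.1)) := by
      fun_prop
    have d0 := (dot.tendsto (a.ofLp, μ0.ofLp)).comp (hb'.prodMk_nhds hm0')
    have d1 := (dot.tendsto (a.ofLp, μ1.ofLp)).comp (hb'.prodMk_nhds hm1')
    have q0 := ((quad.tendsto (a.ofLp, S0)).comp (hb'.prodMk_nhds h0')).sqrt
    have q1 := ((quad.tendsto (a.ofLp, S1)).comp (hb'.prodMk_nhds h1')).sqrt
    have p0 := Real.sqrt_pos.2 (hq S0 h0)
    have p1 := Real.sqrt_pos.2 (hq S1 h1)
    exact (calE_continuousAt _ _ (div_pos p0 p1)).tendsto.comp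
      (((d0.sub d1).div q1 p1.ne').prodMk_nhds (q0.div q1 p1.ne'))
  have hb : Tendsto (fun y : ℕ × EuclideanSpace ℝ (Fin p) => y.2)
      (atTop ×ˢ nhdsWithin a (Metric.sphere 0 1)) (nhds a) :=
    tendsto_snd.mono_right nhdsWithin_le_nhds
  refine Tendsto.mono_right (Tendsto.prodMk_nhds
    (key _ _ _ _ _ _ tendsto_const_nhds tendsto_const_nhds tendsto_const_nhds
      tendsto_const_nhds hb)
    (key _ _ _ _ _ _ (hμ0.comp tendsto_fst) (hμ1.comp tendsto_fst) (hT0.comp tendsto_fst)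
      (hT1.comp tendsto_fst) hb)) (nhds_le_uniformity _)
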